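/- There exist fixed natural numbers m and s such that there is no algorithm (no computable function) which, given arrays of integers a = (a^{i,j}_q) indexed by 1 ≤ i < j ≤ s and 1 ≤ q ≤ m, and b = (b_1,…,b_m), decides whether there exist integers x_1,…,x_s, y_1,…,y_s satisfying ∑_{1 ≤ i < j ≤ s} a^{i,j}_q · (x_i y_j − x_j y_i) = b_q for every 1 ≤ q ≤ m. Formally: there exist m, s such that the predicate (SKEW) on pairs (a,b) is not a computable predicate with respect to the standard encoding of finite integer arrays. -/

import Mathlib

/-- The property (SKEW): there are integers `x 1, …, x s, y 1, …, y s` such that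
`∑_{1 ≤ i < j ≤ s} a q i j * (x i * y j - x j * y i) = b q` for every `q`. -/
def SKEW (m s : ℕ) (a : Fin m → Fin s → Fin s → ℤ) (b : Fin m → ℤ) : Prop :=
  ∃ x y : Fin s → ℤ, ∀ q : Fin m,
    (∑ i : Fin s, ∑ j : Fin s, if i < j then a q i j * (x i * y j - x j * y i) else 0) = b q


namespace MRDP
open Finset

/-! ### Elementary number theory -/

lemma digits_lt (B : ℕ) (d : ℕ → ℕ) (h : ∀ i, d i < B) (m : ℕ) :
    ∑ i ∈ range m, d i * B ^ i < B ^ m := by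
  induction m with
  | zero => simp
  | succ m ih =>
    rw [sum_range_succ, pow_succ]
    have h1 : (d m + 1) * B ^ m ≤ B * B ^ m := Nat.mul_le_mul_right _ (h m)
    nlinarith

lemma digits_extract (B : ℕ) (d : ℕ → ℕ) (h : ∀ i, d i < B) (k m : ℕ) :
    (∑ i ∈ range (k + (m + 1)), d i * B ^ i) / B ^ k % B = d k := by
  have hB : 0 < B := lt_of_le_of_lt (Nat.zero_le _) (h 0)
  rw [sum_range_add]
  have : ∑ x ∈ range (m + 1), d (k + x) * B ^ (k + x)
      = B ^ k * (d k + B * ∑ x ∈ range m, d (k + (x + 1)) * B ^ x) := by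
    rw [sum_range_succ', mul_add, mul_sum, mul_sum, add_comm]
    congr 1
    · simp [mul_comm]
    · apply sum_congr rfl
      intro x _
      ring
  rw [this, Nat.add_mul_div_left _ _ (Nat.pow_pos hB), Nat.div_eq_of_lt (digits_lt B d h k),
    zero_add, Nat.add_mul_mod_self_left, Nat.mod_eq_of_lt (h k)]

lemma choose_formula (n k : ℕ) :
    n.choose k = ((2 ^ n + 1 + 1) ^ n / (2 ^ n + 1) ^ k) % (2 ^ n + 1) := by
  have h : ∀ i, n.choose i < 2 ^ n + 1 := fun i => Nat.lt_succ_of_le (Nat.choose_le_two_pow n i)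
  rw [← digits_extract (2 ^ n + 1) (fun i => n.choose i) h k n]
  congr 2
  rw [add_pow]
  have : k + (n + 1) = (n + 1) + k := by ring
  have hz : ∑ x ∈ range k, n.choose (n + 1 + x) * (2 ^ n + 1) ^ (n + 1 + x) = 0 := by
    apply sum_eq_zero
    intro x _
    rw [Nat.choose_eq_zero_of_lt (by omega), zero_mul]
  rw [this, sum_range_add, hz, add_zero]
  apply sum_congr rfl
  intro x _
  simp [mul_comm]

lemma desc_bound (r n : ℕ) (h : n ≤ r) :
    r ^ (n + 1) ≤ r * r.descFactorial n + n ^ 2 * r ^ n := by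
  induction n with
  | zero => simp
  | succ n ih =>
    have ih := ih (by omega)
    rw [Nat.descFactorial_succ]
    have h1 : r.descFactorial n ≤ r ^ n := Nat.descFactorial_le_pow r n
    obtain ⟨c, hc⟩ : ∃ c, r = n + c := ⟨r - n, by omega⟩
    have hc' : r - n = c := by omega
    rw [hc']
    have e1 : r ^ (n + 1 + 1) ≤ r * (r * r.descFactorial n + n ^ 2 * r ^ n) := by
      rw [pow_succ, mul_comm]; exact Nat.mul_le_mul_left _ ih
    have e2 : r * (r * r.descFactorial n + n ^ 2 * r ^ n) =
      r * (c * r.descFactorial n) + n * (r * r.descFactorial n) + n ^ 2 * r ^ (n + 1) := by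
      conv_lhs => rw [show r * r.descFactorial n = (n + c) * r.descFactorial n by rw [← hc]]
      ring
    have e3 : n * (r * r.descFactorial n) ≤ n * (r ^ (n + 1)) := by
      rw [pow_succ, mul_comm (r ^ n)]; gcongr
    have e4 : (n + 1) ^ 2 * r ^ (n + 1) = n * r ^ (n + 1) + n ^ 2 * r ^ (n + 1)
      + (n + 1) * r ^ (n + 1) := by ring
    have e5 := Nat.zero_le ((n + 1) * r ^ (n + 1))
    omega

lemma factorial_formula (n r : ℕ) (hr : r = n ^ 2 * (n ^ n + 1) + n + 1) :
    n.factorial = r ^ n / r.choose n := by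
  have hn : n ≤ r := by rw [hr]; have := Nat.zero_le (n ^ 2 * (n ^ n + 1)); omega
  have hpos : 0 < r.choose n := Nat.choose_pos hn
  have hd := Nat.descFactorial_eq_factorial_mul_choose r n
  have h1 : r.descFactorial n ≤ r ^ n := Nat.descFactorial_le_pow r n
  have h2 := desc_bound r n hn
  have hf : n.factorial ≤ n ^ n := Nat.factorial_le_pow n
  symm
  rw [Nat.div_eq_iff hpos]
  refine ⟨by rw [← hd]; exact h1, ?_⟩
  have h3 : r ^ n < (n.factorial + 1) * r.choose n := by
    by_contra hcon
    push Not at hcon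
    have h4 : n.factorial * ((n.factorial + 1) * r.choose n) ≤ n.factorial * r ^ n :=
      Nat.mul_le_mul_left _ hcon
    have h5 : (n.factorial + 1) * r.descFactorial n ≤ n.factorial * r ^ n := by
      rw [hd]; calc _ = n.factorial * ((n.factorial + 1) * r.choose n) := by ring
        _ ≤ _ := h4
    have h6 : (n.factorial + 1) * r ^ (n + 1) ≤
        r * (n.factorial * r ^ n) + (n.factorial + 1) * (n ^ 2 * r ^ n) := by
      calc _ ≤ (n.factorial + 1) * (r * r.descFactorial n + n ^ 2 * r ^ n) :=
            Nat.mul_le_mul_left _ h2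
        _ = r * ((n.factorial + 1) * r.descFactorial n) + (n.factorial + 1) * (n ^ 2 * r ^ n) := by
            ring
        _ ≤ _ := by gcongr
    have h7 : r * r ^ n ≤ (n ^ 2 * (n.factorial + 1)) * r ^ n := by
      have e : (n.factorial + 1) * r ^ (n + 1) = r * (n.factorial * r ^ n) + r * r ^ n := by ring
      rw [e] at h6
      have := Nat.le_of_add_le_add_left h6
      calc _ ≤ _ := this
        _ = _ := by ring
    have h8 : r ≤ n ^ 2 * (n.factorial + 1) :=
      Nat.le_of_mul_le_mul_right h7 (Nat.pow_pos (by omega))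
    have h9 : n ^ 2 * (n.factorial + 1) ≤ n ^ 2 * (n ^ n + 1) := by gcongr
    omega
  have : (n.factorial + 1) * r.choose n = n.factorial * r.choose n + r.choose n := by ring
  omega

end MRDP



namespace MRDP
open Finset

lemma dvd_desc_prime {p a u : ℕ} (hp : p.Prime) (h : p ∣ a.descFactorial u) :
    ∃ j < u, a ≡ j [MOD p] := by
  induction u with
  | zero =>
    rw [Nat.descFactorial_zero] at h
    exact absurd (Nat.dvd_one.1 h) hp.one_lt.ne'
  | succ u ih =>
    rw [Nat.descFactorial_succ, hp.dvd_mul] at h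
    rcases h with h | h
    · by_cases hau : u ≤ a
      · exact ⟨u, by omega, ((Nat.modEq_iff_dvd' hau).2 h).symm⟩
      · exact ⟨a, by omega, rfl⟩
    · obtain ⟨j, hj, h⟩ := ih h
      exact ⟨j, by omega, h⟩

lemma dvd_desc_of_modEq {M a u j : ℕ} (hj : j < u) (h : a ≡ j [MOD M]) :
    M ∣ a.descFactorial u := by
  by_cases hau : a < u
  · rw [Nat.descFactorial_eq_zero_iff_lt.2 hau]; exact dvd_zero _
  · induction u with
    | zero => omega
    | succ u ih =>
      rw [Nat.descFactorial_succ]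
      by_cases hju : j = u
      · subst hju
        exact Dvd.dvd.mul_right ((Nat.modEq_iff_dvd' (by omega)).1 h.symm) _
      · exact Dvd.dvd.mul_left (ih (by omega) (by omega)) _

section core

lemma N_dvd {Q y N : ℕ} (hN : N = Q.factorial ^ 2) (hy : y + 3 ≤ Q) {k : ℕ} (hk : k < y) : ∃ c, N = (k + 1) * c ∧ Q.factorial ∣ c := by
  obtain ⟨c, hc⟩ := Nat.dvd_factorial (Nat.succ_pos k) (show k + 1 ≤ Q by omega)
  refine ⟨c * Q.factorial, ?_, Dvd.intro_left c rfl⟩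
  rw [hN, sq]
  nth_rewrite 1 [hc]
  rw [Nat.succ_eq_add_one]
  ring

lemma M_mul {Q y N : ℕ} (hN : N = Q.factorial ^ 2) (hy : y + 3 ≤ Q) {k : ℕ} (hk : k < y) :
    (N / (k + 1) - 1) * (k + 1) = N - 1 - k := by
  obtain ⟨c, hc, -⟩ := N_dvd hN hy hk
  rw [hc, Nat.mul_div_cancel_left _ (Nat.succ_pos k), Nat.sub_mul, mul_comm c]
  omega

lemma M_big {Q y N : ℕ} (hN : N = Q.factorial ^ 2) (hy : y + 3 ≤ Q) {k : ℕ} (hk : k < y) : 2 ≤ N / (k + 1) - 1 := by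
  obtain ⟨c, hc, hq⟩ := N_dvd hN hy hk
  rw [hc, Nat.mul_div_cancel_left _ (Nat.succ_pos k)]
  have hN0 : 0 < N := by rw [hN]; positivity
  have hc0 : 0 < c := by
    rcases Nat.eq_zero_or_pos c with h | h
    · subst h; simp at hc; omega
    · exact h
  have := Nat.le_of_dvd hc0 hq
  have := Nat.self_le_factorial Q
  omega

lemma M_prime {Q y N : ℕ} (hN : N = Q.factorial ^ 2) (hy : y + 3 ≤ Q) {k p : ℕ} (hk : k < y) (hp : p.Prime) (h : p ∣ N / (k + 1) - 1) : Q < p := by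
  by_contra hcon
  obtain ⟨c, hc, hq⟩ := N_dvd hN hy hk
  have hb := M_big hN hy hk
  rw [hc, Nat.mul_div_cancel_left _ (Nat.succ_pos k)] at h hb
  have h1 : p ∣ c := (Nat.dvd_factorial hp.pos (by omega)).trans hq
  have h2 : p ∣ c - (c - 1) := Nat.dvd_sub h1 h
  rw [show c - (c - 1) = 1 by omega] at h2
  exact hp.one_lt.ne' (Nat.dvd_one.1 h2)

lemma N_ge {Q y N : ℕ} (hN : N = Q.factorial ^ 2) (hy : y + 3 ≤ Q) : y + 3 ≤ N := by
  have := Nat.self_le_factorial Q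
  have h2 := Nat.le_self_pow (n := 2) (by norm_num) Q.factorial
  omega

lemma N_modEq {Q y N : ℕ} (hN : N = Q.factorial ^ 2) (hy : y + 3 ≤ Q) {k : ℕ} (hk : k < y) : N - 1 ≡ k [MOD N / (k + 1) - 1] := by
  have := N_ge hN hy
  refine ((Nat.modEq_iff_dvd' (by omega)).2 ?_).symm
  exact ⟨k + 1, (M_mul hN hy hk).symm⟩

lemma M_coprime {Q y N : ℕ} (hN : N = Q.factorial ^ 2) (hy : y + 3 ≤ Q) {k l : ℕ} (hk : k < y) (hl : l < y) (hkl : k < l) :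
    Nat.Coprime (N / (k + 1) - 1) (N / (l + 1) - 1) := by
  apply Nat.coprime_of_dvd
  intro p hp h1 h2
  have hq := M_prime hN hy hk hp h1
  have e1 := (N_modEq hN hy hk).of_dvd h1
  have e2 := (N_modEq hN hy hl).of_dvd h2
  have e3 := e1.symm.trans e2
  have := (Nat.modEq_iff_dvd' (by omega)).1 e3
  have := Nat.le_of_dvd (by omega) this
  omega

lemma choose_prod {Q y N : ℕ} (hN : N = Q.factorial ^ 2) (hy : y + 3 ≤ Q) : (N - 1).choose y = ∏ k ∈ range y, (N / (k + 1) - 1) := by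
  have key : ∀ z ≤ y, (N - 1).choose z = ∏ k ∈ range z, (N / (k + 1) - 1) := by
    intro z
    induction z with
    | zero => simp
    | succ z ih =>
      intro hz
      rw [prod_range_succ, ← ih (by omega)]
      apply Nat.eq_of_mul_eq_mul_right (Nat.succ_pos z)
      rw [Nat.choose_succ_right_eq, ← M_mul hN hy (show z < y by omega)]
      rw [Nat.succ_eq_add_one]
      ring
  exact key y le_rfl

lemma dvd_choose_iff {Q y N : ℕ} (hN : N = Q.factorial ^ 2) (hy : y + 3 ≤ Q) (x : ℕ) :
    (N - 1).choose y ∣ x ↔ ∀ k < y, N / (k + 1) - 1 ∣ x := by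
  rw [choose_prod hN hy]
  constructor
  · intro h k hk
    exact (dvd_prod_of_mem (fun k => N / (k + 1) - 1) (mem_range.2 hk)).trans h
  · intro h
    apply prod_dvd_of_isRelPrime
    · intro a ha b hb hab
      simp only [coe_range, Set.mem_Iio] at ha hb
      apply Nat.coprime_iff_isRelPrime.1
      rcases lt_or_gt_of_ne hab with h | h
      · exact M_coprime hN hy ha hb h
      · exact (M_coprime hN hy hb ha h).symm
    · intro k hk
      exact h k (mem_range.1 hk)

end core

lemma bounded_core {ι : Type} [Finite ι] (P : ℕ → (ι → ℕ) → ℤ)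
    (hP : ∀ (d k k' : ℕ) (t t' : ι → ℕ), k ≡ k' [MOD d] → (∀ i, t i ≡ t' i [MOD d]) →
      P k t ≡ P k' t' [ZMOD d])
    (y : ℕ) (B : ℕ → ℕ)
    (hB : ∀ u, ∀ k < y, ∀ t : ι → ℕ, (∀ i, t i < u) → (P k t).natAbs ≤ B u) :
    (∀ k < y, ∃ t, P k t = 0) ↔ ∃ u, ∃ a : ι → ℕ,
      (((B u + y + 3).factorial ^ 2 - 1).choose y ∣ (P ((B u + y + 3).factorial ^ 2 - 1) a).natAbs)
      ∧ ∀ i, ((B u + y + 3).factorial ^ 2 - 1).choose y ∣ (a i).descFactorial u := by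
  cases nonempty_fintype ι
  constructor
  · intro h
    choose! t ht using h
    let u := (∑ k ∈ range y, ∑ i, t k i) + 1
    have hu : ∀ k < y, ∀ i, t k i < u := by
      intro k hk i
      apply Nat.lt_succ_of_le
      calc t k i ≤ ∑ i, t k i := single_le_sum (f := fun i => t k i) (fun _ _ => Nat.zero_le _) (mem_univ i)
        _ ≤ _ := single_le_sum (f := fun k => ∑ i, t k i) (fun _ _ => Nat.zero_le _) (mem_range.2 hk)
    refine ⟨u, ?_⟩
    generalize hQ : B u + y + 3 = Q
    generalize hN : Q.factorial ^ 2 = N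
    have hN := hN.symm
    have hy : y + 3 ≤ Q := by omega
    have hcrt : ∀ i, ∃ a : ℕ, ∀ k < y, a ≡ t k i [MOD N / (k + 1) - 1] := by
      intro i
      have := Nat.chineseRemainderOfFinset (fun k => t k i) (fun k => N / (k + 1) - 1) (range y)
        (by intro k hk; have := M_big hN hy (mem_range.1 hk); omega)
        (by
          intro a ha b hb hab
          simp only [coe_range, Set.mem_Iio] at ha hb
          rcases lt_or_gt_of_ne hab with h | h
          · exact M_coprime hN hy ha hb h
          · exact (M_coprime hN hy hb ha h).symm)
      exact ⟨this.1, fun k hk => this.2 k (mem_range.2 hk)⟩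
    choose a ha using hcrt
    refine ⟨a, ?_, ?_⟩
    · rw [dvd_choose_iff hN hy]
      intro k hk
      have := hP (N / (k + 1) - 1) (N - 1) k a (t k) (N_modEq hN hy hk) (fun i => ha i k hk)
      rw [ht k hk] at this
      exact Int.natCast_dvd.1 (Int.modEq_zero_iff_dvd.1 this)
    · intro i
      rw [dvd_choose_iff hN hy]
      intro k hk
      exact dvd_desc_of_modEq (hu k hk i) (ha i k hk)
  · rintro ⟨u, a, h1, h2⟩ k hk
    generalize hQ : B u + y + 3 = Q at h1 h2
    generalize hN : Q.factorial ^ 2 = N at h1 h2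
    have hN := hN.symm
    have hy : y + 3 ≤ Q := by omega
    simp only [dvd_choose_iff hN hy] at h1 h2
    have hb := M_big hN hy hk
    obtain ⟨p, hp, hpd⟩ := Nat.exists_prime_and_dvd (show N / (k + 1) - 1 ≠ 1 by omega)
    have hpQ := M_prime hN hy hk hp hpd
    have : ∀ i, ∃ j < u, a i ≡ j [MOD p] :=
      fun i => dvd_desc_prime hp (hpd.trans (h2 i k hk))
    choose t ht hta using this
    refine ⟨t, ?_⟩
    have e := hP p (N - 1) k a t ((N_modEq hN hy hk).of_dvd hpd) hta
    have e1 : (p : ℤ) ∣ P (N - 1) a := Int.natCast_dvd.2 (hpd.trans (h1 k hk))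
    have e2 : (p : ℤ) ∣ P k t := (Int.ModEq.dvd_iff e).1 e1
    have e3 := Int.natCast_dvd.1 e2
    have e4 := hB u k hk t ht
    by_contra hne
    have := Nat.le_of_dvd (Int.natAbs_pos.2 hne) e3
    omega

end MRDP



namespace MRDP
open Dioph Fin2 Vector3
open scoped Vector3 Dioph

variable {α : Type}

lemma DiophFn.of_graph {f : (α → ℕ) → ℕ} (R : (α → ℕ) → ℕ → Prop)
    (h : Dioph {v : Option α → ℕ | R (v ∘ some) (v none)}) (hR : ∀ v w, R v w ↔ f v = w) :
    DiophFn f :=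
  Dioph.ext h fun _ => hR _ _

lemma DiophFn.lift {f : (α → ℕ) → ℕ} (h : DiophFn f) :
    DiophFn (fun v : Option α → ℕ => f (v ∘ some)) := reindex_diophFn some h

lemma dioph_ex (R : ℕ → (α → ℕ) → Prop)
    (h : Dioph {v : Option α → ℕ | R (v none) (v ∘ some)}) : Dioph {v | ∃ x, R x v} :=
  Dioph.ext (ex1_dioph h) fun _ => Iff.rfl

lemma dioph_subst (R : ℕ → (α → ℕ) → Prop) {f : (α → ℕ) → ℕ} (hf : DiophFn f)
    (h : Dioph {v : Option α → ℕ | R (v none) (v ∘ some)}) : Dioph {v | R (f v) v} :=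
  Dioph.ext (diophFn_comp1 h hf) fun _ => Iff.rfl

lemma dioph_and {S T : (α → ℕ) → Prop} (hS : Dioph {v | S v}) (hT : Dioph {v | T v}) :
    Dioph {v | S v ∧ T v} := hS.inter hT

lemma dioph_or {S T : (α → ℕ) → Prop} (hS : Dioph {v | S v}) (hT : Dioph {v | T v}) :
    Dioph {v | S v ∨ T v} := hS.union hT

lemma dioph_true : Dioph {_v : α → ℕ | True} :=
  Dioph.ext (eq_dioph (const_dioph 0) (const_dioph 0)) fun _ => by simp [Function.const]

lemma dioph_forall_list {ι : Type} (l : List ι) (S : ι → (α → ℕ) → Prop)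
    (h : ∀ i, Dioph {v | S i v}) : Dioph {v | ∀ i ∈ l, S i v} := by
  induction l with
  | nil => exact Dioph.ext dioph_true fun _ => by simp
  | cons a l ih => exact Dioph.ext (dioph_and (h a) ih) fun _ => by simp

lemma dioph_forall_finite {ι : Type} [Finite ι] (S : ι → (α → ℕ) → Prop)
    (h : ∀ i, Dioph {v | S i v}) : Dioph {v | ∀ i, S i v} := by
  cases nonempty_fintype ι
  exact Dioph.ext (dioph_forall_list Finset.univ.toList S h) fun _ => by simp

section
variable {f g : (α → ℕ) → ℕ}

lemma choose_dioph (df : DiophFn f) (dg : DiophFn g) : DiophFn fun v => (f v).choose (g v) := by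
  have h : DiophFn fun v => ((2 ^ f v + 1 + 1) ^ f v / (2 ^ f v + 1) ^ g v) % (2 ^ f v + 1) := by
    have hp : DiophFn fun v => 2 ^ f v + 1 := add_dioph (pow_dioph (const_dioph 2) df) (const_dioph 1)
    exact mod_dioph (div_dioph (pow_dioph (add_dioph hp (const_dioph 1)) df) (pow_dioph hp dg)) hp
  have e : (fun v => (f v).choose (g v)) =
    fun v => ((2 ^ f v + 1 + 1) ^ f v / (2 ^ f v + 1) ^ g v) % (2 ^ f v + 1) :=
      funext fun v => choose_formula _ _
  rw [e]; exact h

lemma factorial_dioph (df : DiophFn f) : DiophFn fun v => (f v).factorial := by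
  have hr : DiophFn fun v => f v ^ 2 * (f v ^ f v + 1) + f v + 1 :=
    add_dioph (add_dioph (mul_dioph (pow_dioph df (const_dioph 2))
      (add_dioph (pow_dioph df df) (const_dioph 1))) df) (const_dioph 1)
  have h := div_dioph (pow_dioph hr df) (choose_dioph hr df)
  have e : (fun v => (f v).factorial) = fun v => (f v ^ 2 * (f v ^ f v + 1) + f v + 1) ^ f v /
      (f v ^ 2 * (f v ^ f v + 1) + f v + 1).choose (f v) :=
    funext fun v => factorial_formula _ _ rfl
  rw [e]; exact h

lemma descFactorial_dioph (df : DiophFn f) (dg : DiophFn g) : DiophFn fun v => (f v).descFactorial (g v) := by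
  have h := mul_dioph (factorial_dioph dg) (choose_dioph df dg)
  simpa only [Nat.descFactorial_eq_factorial_mul_choose] using h

end

lemma poly_bound {γ : Type} (p : Poly γ) (g : γ → (α → ℕ) → ℕ) (hg : ∀ i, DiophFn (g i)) :
    ∃ Q : (α → ℕ) → ℕ, DiophFn Q ∧ ∀ w x, (∀ i, x i ≤ g i w) → (p x).natAbs ≤ Q w := by
  induction p using Poly.induction with
  | H1 i => exact ⟨g i, hg i, fun w x h => by simpa using h i⟩
  | H2 n => exact ⟨fun _ => n.natAbs, const_dioph _, fun w x h => by simp⟩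
  | H3 p q hp hq =>
    obtain ⟨P, hP, hP'⟩ := hp
    obtain ⟨Q, hQ, hQ'⟩ := hq
    refine ⟨_, add_dioph hP hQ, fun w x h => ?_⟩
    have := hP' w x h
    have := hQ' w x h
    have := Int.natAbs_sub_le (p x) (q x)
    simp only [Poly.sub_apply]
    omega
  | H4 p q hp hq =>
    obtain ⟨P, hP, hP'⟩ := hp
    obtain ⟨Q, hQ, hQ'⟩ := hq
    refine ⟨_, mul_dioph hP hQ, fun w x h => ?_⟩
    simp only [Poly.mul_apply, Int.natAbs_mul]
    exact Nat.mul_le_mul (hP' w x h) (hQ' w x h)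

lemma poly_congr {γ : Type} (p : Poly γ) (d : ℕ) (x y : γ → ℕ) (h : ∀ i, x i ≡ y i [MOD d]) :
    p x ≡ p y [ZMOD d] := by
  induction p using Poly.induction with
  | H1 i => simpa using Int.natCast_modEq_iff.2 (h i)
  | H2 n => simp
  | H3 p q hp hq => simpa using hp.sub hq
  | H4 p q hp hq => simpa using hp.mul hq

lemma poly_finite {γ β : Type} (p : Poly (γ ⊕ β)) :
    ∃ (s : Finset β) (q : Poly (γ ⊕ s)), p = q.map (Sum.map id Subtype.val) := by
  classical
  have up : ∀ (s t : Finset β) (h : s ⊆ t) (q : Poly (γ ⊕ s)), ∃ q' : Poly (γ ⊕ t),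
      q.map (Sum.map id Subtype.val) = q'.map (Sum.map id Subtype.val) := by
    intro s t h q
    refine ⟨q.map (Sum.map id fun x => ⟨x.1, h x.2⟩), ?_⟩
    ext v
    simp only [Poly.map_apply]
    congr 1
    ext i
    rcases i with i | i <;> rfl
  induction p using Poly.induction with
  | H1 i =>
    rcases i with i | i
    · exact ⟨∅, Poly.proj (Sum.inl i), rfl⟩
    · exact ⟨{i}, Poly.proj (Sum.inr ⟨i, by simp⟩), rfl⟩
  | H2 n => exact ⟨∅, Poly.const n, rfl⟩
  | H3 p q hp hq =>
    obtain ⟨s, p', rfl⟩ := hp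
    obtain ⟨t, q', rfl⟩ := hq
    obtain ⟨p'', hp⟩ := up s (s ∪ t) Finset.subset_union_left p'
    obtain ⟨q'', hq⟩ := up t (s ∪ t) Finset.subset_union_right q'
    exact ⟨s ∪ t, p'' - q'', by rw [hp, hq]; rfl⟩
  | H4 p q hp hq =>
    obtain ⟨s, p', rfl⟩ := hp
    obtain ⟨t, q', rfl⟩ := hq
    obtain ⟨p'', hp⟩ := up s (s ∪ t) Finset.subset_union_left p'
    obtain ⟨q'', hq⟩ := up t (s ∪ t) Finset.subset_union_right q'
    exact ⟨s ∪ t, p'' * q'', by rw [hp, hq]; rfl⟩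

lemma dioph_finite {γ : Type} {S : Set (γ → ℕ)} (h : Dioph S) :
    ∃ (β : Type) (_ : Finite β) (p : Poly (γ ⊕ β)), ∀ v, v ∈ S ↔ ∃ t, p (Sum.elim v t) = 0 := by
  classical
  obtain ⟨β, p, hp⟩ := h
  obtain ⟨s, q, rfl⟩ := poly_finite p
  refine ⟨s, inferInstance, q, fun v => (hp v).trans ⟨?_, ?_⟩⟩
  · rintro ⟨t, ht⟩
    refine ⟨fun i => t i.1, ?_⟩
    rw [← ht, Poly.map_apply]
    congr 1
    ext i
    rcases i with i | i <;> rfl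
  · rintro ⟨t, ht⟩
    refine ⟨fun i => if h : i ∈ s then t ⟨i, h⟩ else 0, ?_⟩
    rw [← ht, Poly.map_apply]
    congr 1
    ext i
    rcases i with i | i
    · rfl
    · simp

/-- The bounded universal quantifier theorem. -/
theorem dioph_ball (R : ℕ → (α → ℕ) → Prop) {f : (α → ℕ) → ℕ} (hf : DiophFn f)
    (h : Dioph {v : Option α → ℕ | R (v none) (v ∘ some)}) :
    Dioph {v | ∀ k < f v, R k v} := by
  obtain ⟨β, _, p, hp⟩ := dioph_finite h
  -- new variables: `inr none` is `u`, `inr (some i)` is `a i`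
  let G : Type := α ⊕ Option β
  let yy : (G → ℕ) → ℕ := fun w => f (w ∘ Sum.inl)
  have hyy : DiophFn yy := reindex_diophFn Sum.inl hf
  let uu : (G → ℕ) → ℕ := fun w => w (Sum.inr none)
  have huu : DiophFn uu := proj_dioph _
  obtain ⟨Q0, hQ0, hQb⟩ := poly_bound (α := Option α) p
    (Sum.elim (fun o => o.elim (fun w => f (w ∘ some)) (fun i w => w (some i)))
      (fun _ w => w none)) (by
      rintro ((_ | i) | i)
      · exact DiophFn.lift hf
      · exact proj_dioph _
      · exact proj_dioph _)
  let Q : (G → ℕ) → ℕ := fun w => Q0 (w ∘ fun o => o.elim (Sum.inr none) Sum.inl)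
  have hQ : DiophFn Q := reindex_diophFn _ hQ0
  let NN : (G → ℕ) → ℕ := fun w => (Q w + yy w + 3).factorial ^ 2 - 1
  have hNN : DiophFn NN := sub_dioph (pow_dioph (factorial_dioph
    (add_dioph (add_dioph hQ hyy) (const_dioph 3))) (const_dioph 2)) (const_dioph 1)
  let CC : (G → ℕ) → ℕ := fun w => (NN w).choose (yy w)
  have hCC : DiophFn CC := choose_dioph hNN hyy
  have key : Dioph {w : G → ℕ | (CC w ∣ (p (Sum.elim (fun o : Option α => o.elim (NN w) (w ∘ Sum.inl))
      (fun i => w (Sum.inr (some i))))).natAbs) ∧ ∀ i : β, CC w ∣ (w (Sum.inr (some i))).descFactorial (uu w)} := by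
    apply dioph_and
    · refine dioph_subst (fun N w => CC w ∣ (p (Sum.elim (fun o : Option α => o.elim N (w ∘ Sum.inl))
        (fun i => w (Sum.inr (some i))))).natAbs) hNN ?_
      apply dvd_dioph (DiophFn.lift hCC)
      have := abs_poly_dioph (p.map (Sum.elim (fun o : Option α => o.elim none (fun i => some (Sum.inl i)))
        (fun i => some (Sum.inr (some i))) : Option α ⊕ β → Option G))
      convert! this using 5 with w
      rw [Poly.map_apply]
      congr 1
      ext i
      rcases i with (_ | i) | i <;> rfl
    · apply dioph_forall_finite
      intro i
      exact dvd_dioph hCC (descFactorial_dioph (proj_dioph _) huu)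
  refine Dioph.ext (ex_dioph key) fun v => ?_
  have core := bounded_core (ι := β) (fun k t => p (Sum.elim (fun o : Option α => o.elim k v) t))
    (by
      intro d k k' t t' hk ht
      apply poly_congr
      rintro ((_ | i) | i)
      · exact hk
      · rfl
      · exact ht i)
    (f v) (fun u => Q0 (fun o => o.elim u v)) (by
      intro u k hk t ht
      apply hQb
      rintro ((_ | i) | i)
      · exact hk.le
      · exact le_rfl
      · exact (ht i).le)
  have e1 : (∀ k < f v, R k v) ↔
      ∀ k < f v, ∃ t, p (Sum.elim (fun o : Option α => o.elim k v) t) = 0 := by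
    refine forall_congr' fun k => imp_congr_right fun _ => ?_
    exact hp (fun o : Option α => o.elim k v)
  refine Iff.trans ?_ (e1.trans core).symm
  have eQ : ∀ x : Option β → ℕ, Q (Sum.elim v x) = Q0 (fun o => o.elim (x none) v) := by
    intro x
    simp only [Q]
    congr 1
    ext o
    rcases o with _ | o <;> rfl
  constructor
  · rintro ⟨x, h1, h2⟩
    refine ⟨x none, fun i => x (some i), ?_, ?_⟩
    · rw [← eQ]; exact h1
    · rw [← eQ]; exact h2
  · rintro ⟨u, a, h1, h2⟩
    have eQ' : Q (Sum.elim v (fun o => o.elim u a)) = Q0 (fun o => o.elim u v) := eQ _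
    rw [← eQ'] at h1 h2
    exact ⟨fun o => o.elim u a, h1, h2⟩

end MRDP



namespace MRDP
open Dioph

/-- A unary function on the naturals that preserves Diophantine functions. -/
def D1 (F : ℕ → ℕ) : Prop :=
  ∀ {α : Type} {f : (α → ℕ) → ℕ}, DiophFn f → DiophFn fun v => F (f v)

section
variable {α : Type} {f g : (α → ℕ) → ℕ}

lemma pair_dioph (df : DiophFn f) (dg : DiophFn g) : DiophFn fun v => Nat.pair (f v) (g v) := by
  refine DiophFn.of_graph (fun v w => (f v < g v ∧ g v * g v + f v = w) ∨
    (g v ≤ f v ∧ f v * f v + f v + g v = w)) ?_ ?_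
  · have df := DiophFn.lift df
    have dg := DiophFn.lift dg
    have dn : DiophFn fun v : Option α → ℕ => v none := proj_dioph none
    exact dioph_or (dioph_and (lt_dioph df dg) (eq_dioph (add_dioph (mul_dioph dg dg) df) dn))
      (dioph_and (le_dioph dg df) (eq_dioph (add_dioph (add_dioph (mul_dioph df df) df) dg) dn))
  · intro v w
    unfold Nat.pair
    split_ifs <;> omega

lemma left_dioph (df : DiophFn f) : DiophFn fun v => (f v).unpair.1 := by
  refine DiophFn.of_graph (fun v w => ∃ b, Nat.pair w b = f v) ?_ ?_
  · refine dioph_ex (fun b (v : Option α → ℕ) => Nat.pair (v none) b = f (v ∘ some)) ?_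
    exact eq_dioph (pair_dioph (proj_dioph (some none)) (proj_dioph none)) (DiophFn.lift (DiophFn.lift df))
  · intro v w
    constructor
    · rintro ⟨b, h⟩
      rw [← h, Nat.unpair_pair]
    · rintro rfl
      exact ⟨_, Nat.pair_unpair _⟩

lemma right_dioph (df : DiophFn f) : DiophFn fun v => (f v).unpair.2 := by
  refine DiophFn.of_graph (fun v w => ∃ b, Nat.pair b w = f v) ?_ ?_
  · refine dioph_ex (fun b (v : Option α → ℕ) => Nat.pair b (v none) = f (v ∘ some)) ?_
    exact eq_dioph (pair_dioph (proj_dioph none) (proj_dioph (some none))) (DiophFn.lift (DiophFn.lift df))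
  · intro v w
    constructor
    · rintro ⟨b, h⟩
      rw [← h, Nat.unpair_pair]
    · rintro rfl
      exact ⟨_, Nat.pair_unpair _⟩

lemma beta_dioph (df : DiophFn f) (dg : DiophFn g) : DiophFn fun v => Nat.beta (f v) (g v) :=
  mod_dioph (left_dioph df) (add_dioph (mul_dioph (add_dioph dg (const_dioph 1)) (right_dioph df))
    (const_dioph 1))

end

lemma exists_beta (s : ℕ → ℕ) (n : ℕ) : ∃ c, ∀ i ≤ n, Nat.beta c i = s i := by
  refine ⟨Nat.unbeta ((List.range (n + 1)).map s), fun i hi => ?_⟩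
  have := Nat.beta_unbeta_coe ((List.range (n + 1)).map s) ⟨i, by simp; omega⟩
  simpa using this

lemma rec_iff (a : ℕ) (h : ℕ → ℕ → ℕ) (n w : ℕ) :
    (∃ c, Nat.beta c 0 = a ∧ (∀ k < n, Nat.beta c (k + 1) = h k (Nat.beta c k)) ∧ Nat.beta c n = w) ↔
    (Nat.rec a (fun y IH => h y IH) n : ℕ) = w := by
  constructor
  · rintro ⟨c, h0, hs, rfl⟩
    have : ∀ k ≤ n, (Nat.rec a (fun y IH => h y IH) k : ℕ) = Nat.beta c k := by
      intro k
      induction k with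
      | zero => intro _; exact h0.symm
      | succ k ih =>
        intro hk
        rw [hs k (by omega), ← ih (by omega)]
    exact this n le_rfl
  · rintro rfl
    obtain ⟨c, hc⟩ := exists_beta (fun k => Nat.rec a (fun y IH => h y IH) k) n
    refine ⟨c, hc 0 (Nat.zero_le _), fun k hk => ?_, hc n le_rfl⟩
    rw [hc (k + 1) hk, hc k hk.le]

lemma prec_dioph {F G : ℕ → ℕ} (hF : D1 F) (hG : D1 G) :
    D1 (Nat.unpaired fun z n => n.rec (F z) fun y IH => G <| Nat.pair z <| Nat.pair y IH) := by
  intro α f df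
  refine DiophFn.of_graph (fun v w => ∃ c, Nat.beta c 0 = F (f v).unpair.1 ∧
    (∀ k < (f v).unpair.2, Nat.beta c (k + 1) =
      G (Nat.pair (f v).unpair.1 (Nat.pair k (Nat.beta c k)))) ∧ Nat.beta c (f v).unpair.2 = w) ?_ ?_
  · refine dioph_ex (fun c (v : Option α → ℕ) => Nat.beta c 0 = F (f (v ∘ some)).unpair.1 ∧
      (∀ k < (f (v ∘ some)).unpair.2, Nat.beta c (k + 1) =
      G (Nat.pair (f (v ∘ some)).unpair.1 (Nat.pair k (Nat.beta c k)))) ∧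
        Nat.beta c (f (v ∘ some)).unpair.2 = v none) ?_
    have df2 := (DiophFn.lift (DiophFn.lift df))
    refine dioph_and (eq_dioph (beta_dioph (proj_dioph _) (const_dioph 0)) (hF (left_dioph df2)))
      (dioph_and ?_ (eq_dioph (beta_dioph (proj_dioph _) (right_dioph df2)) (proj_dioph _)))
    refine dioph_ball (fun k (v : Option (Option α) → ℕ) => Nat.beta (v none) (k + 1) =
      G (Nat.pair (f ((v ∘ some) ∘ some)).unpair.1 (Nat.pair k (Nat.beta (v none) k))))
      (right_dioph df2) ?_
    have df3 := DiophFn.lift df2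
    have dk : DiophFn fun v : Option (Option (Option α)) → ℕ => v none := proj_dioph none
    have dc : DiophFn fun v : Option (Option (Option α)) → ℕ => v (some none) := proj_dioph _
    exact eq_dioph (beta_dioph dc (add_dioph dk (const_dioph 1)))
      (hG (pair_dioph (left_dioph df3) (pair_dioph dk (beta_dioph dc dk))))
  · intro v w
    exact rec_iff _ (fun k x => G (Nat.pair (f v).unpair.1 (Nat.pair k x))) _ _

lemma primrec_dioph {F : ℕ → ℕ} (h : Nat.Primrec F) : D1 F := by
  induction h with
  | zero => exact fun _ => const_dioph 0
  | succ => exact fun df => add_dioph df (const_dioph 1)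
  | left => exact fun df => left_dioph df
  | right => exact fun df => right_dioph df
  | pair _ _ hf hg => exact fun df => pair_dioph (hf df) (hg df)
  | comp _ _ hf hg => exact fun df => hf (hg df)
  | prec _ _ hf hg => exact prec_dioph hf hg

open Nat.Partrec (Code)
open Nat.Partrec.Code

/-- There is a Diophantine set of naturals that is not computable. -/
theorem exists_undecidable_dioph :
    ∃ S : ℕ → Prop, Dioph {v : Unit → ℕ | S (v ())} ∧ ¬ ComputablePred S := by
  refine ⟨fun n => (eval (Denumerable.ofNat Code n) 0).Dom, ?_, ?_⟩
  · let F : ℕ → ℕ := fun m => Encodable.encode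
      (evaln m.unpair.1 (Denumerable.ofNat Code m.unpair.2) 0)
    have hF : Primrec F := by
      apply Primrec.encode.comp
      exact primrec_evaln.comp (((Primrec.fst.comp Primrec.unpair).pair
        ((Primrec.ofNat Code).comp (Primrec.snd.comp Primrec.unpair))).pair (Primrec.const 0))
    have hD : D1 F := primrec_dioph (Primrec.nat_iff.1 hF)
    refine Dioph.ext (dioph_ex (fun k (v : Unit → ℕ) => F (Nat.pair k (v ())) ≠ 0)
      (ne_dioph (hD (pair_dioph (proj_dioph none) (proj_dioph (some ())))) (const_dioph 0))) ?_
    intro v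
    simp only [Set.mem_ofPred_eq, F, Nat.unpair_pair, Part.dom_iff_mem]
    constructor
    · rintro ⟨k, hk⟩
      cases he : evaln k (Denumerable.ofNat Code (v ())) 0 with
      | none => rw [he] at hk; exact absurd rfl hk
      | some x => exact ⟨x, evaln_sound he⟩
    · rintro ⟨x, hx⟩
      obtain ⟨k, hk⟩ := evaln_complete.1 hx
      refine ⟨k, ?_⟩
      rw [Option.mem_def.1 hk]
      simp
  · intro h
    apply ComputablePred.halting_problem 0
    refine ComputablePred.computable_of_manyOneReducible (q := fun n => (eval (Denumerable.ofNat Code n) 0).Dom)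
      ⟨Encodable.encode, Computable.encode, fun c => ?_⟩ h
    simp

end MRDP


namespace MRDP
open Finset

/-! ### From Diophantine equations to (SKEW) -/

/-- Polynomial expressions. -/
inductive PExpr (ν : Type) : Type
  | var (i : ν) : PExpr ν
  | const (c : ℤ) : PExpr ν
  | add (f g : PExpr ν) : PExpr ν
  | sub (f g : PExpr ν) : PExpr ν
  | mul (f g : PExpr ν) : PExpr ν

namespace PExpr
variable {ν : Type}

/-- Evaluation of expressions. -/
def eval (w : ν → ℤ) : PExpr ν → ℤ
  | var i => w i
  | const c => c
  | add f g => eval w f + eval w g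
  | sub f g => eval w f - eval w g
  | mul f g => eval w f * eval w g

/-- The list of subexpressions. -/
def subs : PExpr ν → List (PExpr ν)
  | var i => [var i]
  | const c => [const c]
  | add f g => add f g :: (subs f ++ subs g)
  | sub f g => sub f g :: (subs f ++ subs g)
  | mul f g => mul f g :: (subs f ++ subs g)

lemma self_mem_subs (e : PExpr ν) : e ∈ subs e := by cases e <;> simp [subs]

/-- Closure of a list under immediate subexpressions. -/
def Closed (l : List (PExpr ν)) : Prop :=
  ∀ f g, (add f g ∈ l ∨ sub f g ∈ l ∨ mul f g ∈ l) → f ∈ l ∧ g ∈ l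

lemma closed_subs (e : PExpr ν) : Closed (subs e) := by
  induction e with
  | var i => intro f g h; simp [subs] at h
  | const c => intro f g h; simp [subs] at h
  | add a b ha hb | sub a b ha hb | mul a b ha hb =>
    intro f g h
    have ha := ha f g
    have hb := hb f g
    have := self_mem_subs a
    have := self_mem_subs b
    simp only [subs, List.mem_cons, List.mem_append, reduceCtorEq, false_or, PExpr.add.injEq,
      PExpr.sub.injEq, PExpr.mul.injEq] at h ⊢
    grind

lemma Closed.append {l l' : List (PExpr ν)} (h : Closed l) (h' : Closed l') :
    Closed (l ++ l') := by
  intro f g hh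
  have := h f g
  have := h' f g
  simp only [List.mem_append] at *
  tauto

end PExpr

/-- A linear form in the 2 × 2 minors. -/
def minorForm {ι : Type} [Fintype ι] (x y : ι → ℤ) (c : ι → ι → ℤ) : ℤ :=
  ∑ i, ∑ j, c i j * (x i * y j - x j * y i)

section minorForm
variable {ι : Type} [Fintype ι] (x y : ι → ℤ)

lemma minorForm_sub (c d : ι → ι → ℤ) :
    minorForm x y (c - d) = minorForm x y c - minorForm x y d := by
  simp only [minorForm, Pi.sub_apply, sub_mul, sum_sub_distrib]

lemma minorForm_zero : minorForm x y 0 = 0 := by simp [minorForm]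

open Classical in
/-- The coefficient array of a single minor. -/
noncomputable def unitC (i j : ι) : ι → ι → ℤ := fun a b => if a = i then (if b = j then 1 else 0) else 0

lemma minorForm_unit (i j : ι) : minorForm x y (unitC i j) = x i * y j - x j * y i := by
  classical
  simp only [minorForm, unitC]
  rw [sum_eq_single i, sum_eq_single j] <;> simp +contextual

end minorForm

lemma antisymm_sum {s : ℕ} (c P : Fin s → Fin s → ℤ) (hP : ∀ i j, P j i = - P i j) :
    (∑ i, ∑ j, if i < j then (c i j - c j i) * P i j else 0) = ∑ i, ∑ j, c i j * P i j := by
  have h1 : ∀ i j, (if i < j then (c i j - c j i) * P i j else 0)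
      = (if i < j then c i j * P i j else 0) + (if i < j then c j i * P j i else 0) := by
    intro i j
    split_ifs
    · rw [hP i j]; ring
    · simp
  simp only [h1, sum_add_distrib]
  rw [sum_comm (f := fun i j => if i < j then c j i * P j i else 0)]
  rw [← sum_add_distrib]
  apply sum_congr rfl
  intro i _
  rw [← sum_add_distrib]
  apply sum_congr rfl
  intro j _
  rcases lt_trichotomy i j with h | h | h
  · simp [h, h.not_gt]
  · subst h
    have : P i i = 0 := by have := hP i i; omega
    simp [this]
  · simp [h, h.not_gt]

lemma skew_general {ι κ : Type} [Fintype ι] [Fintype κ] (c : κ → ι → ι → ℤ) :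
    ∃ (m s : ℕ) (a : Fin m → Fin s → Fin s → ℤ) (e : κ ≃ Fin m), ∀ b : κ → ℤ,
      SKEW m s a (fun q => b (e.symm q)) ↔ ∃ x y : ι → ℤ, ∀ q, minorForm x y (c q) = b q := by
  let e := Fintype.equivFin κ
  let d := Fintype.equivFin ι
  refine ⟨_, _, fun q i j => c (e.symm q) (d.symm i) (d.symm j) - c (e.symm q) (d.symm j) (d.symm i),
    e, fun b => ?_⟩
  have key : ∀ (x y : ι → ℤ) (q : κ), minorForm x y (c q) = ∑ i, ∑ j,
      if i < j then (c q (d.symm i) (d.symm j) - c q (d.symm j) (d.symm i)) *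
        (x (d.symm i) * y (d.symm j) - x (d.symm j) * y (d.symm i)) else 0 := by
    intro x y q
    rw [antisymm_sum (fun i j => c q (d.symm i) (d.symm j))
      (fun i j => x (d.symm i) * y (d.symm j) - x (d.symm j) * y (d.symm i)) (by intros; ring)]
    unfold minorForm
    rw [← d.symm.sum_comp]
    apply sum_congr rfl
    intro i _
    rw [← d.symm.sum_comp]
  constructor
  · rintro ⟨x, y, h⟩
    refine ⟨x ∘ d, y ∘ d, fun q => ?_⟩
    rw [key]
    have := h (e q)
    simpa using this
  · rintro ⟨x, y, h⟩
    refine ⟨x ∘ d.symm, y ∘ d.symm, fun q => ?_⟩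
    have := h (e.symm q)
    rw [key] at this
    simpa using this

open PExpr in
lemma skew_of_expr {ν : Type} (E₁ E₂ : PExpr ν) :
    ∃ (m s : ℕ) (a : Fin m → Fin s → Fin s → ℤ) (b₀ : Fin m → ℤ) (q₀ : Fin m), ∀ n : ℤ,
      SKEW m s a (fun q => if q = q₀ then n else b₀ q) ↔
        ∃ w : ν → ℤ, E₁.eval w = 0 ∧ E₂.eval w = n := by
  classical
  let l : List (PExpr ν) := subs E₁ ++ (subs E₂ ++ subs (const 1))
  have hl : Closed l := (closed_subs _).append ((closed_subs _).append (closed_subs _))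
  let V : Type := {e // e ∈ l}
  have : Fintype V := Fintype.subtype l.toFinset (by simp)
  let one : V := ⟨const 1, by simp [l, subs]⟩
  let R₁ : V := ⟨E₁, by simp [l, self_mem_subs]⟩
  let R₂ : V := ⟨E₂, by simp [l, self_mem_subs]⟩
  let r : PExpr ν → V := fun e => if h : e ∈ l then ⟨e, h⟩ else one
  have hr : ∀ e (h : e ∈ l), r e = ⟨e, h⟩ := fun e h => by simp [r, h]
  let A : V → V × Bool := fun e => (e, false)
  let B : V → V × Bool := fun e => (e, true)
  let c : (V ⊕ V ⊕ V) ⊕ V ⊕ Unit ⊕ Unit → V × Bool → V × Bool → ℤ := fun q => match q with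
    | .inl (.inl e) => unitC (A one) (A e)
    | .inl (.inr (.inl e)) => unitC (B one) (B e)
    | .inl (.inr (.inr e)) => unitC (A one) (B e) - unitC (A e) (B one)
    | .inr (.inl e) => match e.1 with
      | var _ => 0
      | const _ => unitC (A one) (B e)
      | add f g => unitC (A one) (B e) - unitC (A one) (B (r f)) - unitC (A one) (B (r g))
      | sub f g => unitC (A one) (B (r f)) - unitC (A one) (B (r g)) - unitC (A one) (B e)
      | mul f g => unitC (A (r f)) (B (r g)) - unitC (A one) (B e)
    | .inr (.inr (.inl _)) => unitC (A one) (B R₁)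
    | .inr (.inr (.inr _)) => unitC (A one) (B R₂)
  let b : (V ⊕ V ⊕ V) ⊕ V ⊕ Unit ⊕ Unit → ℤ := fun q => match q with
    | .inr (.inl e) => match e.1 with
      | const k => k
      | _ => 0
    | _ => 0
  let k₀ : (V ⊕ V ⊕ V) ⊕ V ⊕ Unit ⊕ Unit := .inr (.inr (.inr ()))
  obtain ⟨m, s, a, e, h⟩ := skew_general c
  refine ⟨m, s, a, fun q => b (e.symm q), e k₀, fun n => ?_⟩
  have h := h (fun q => if q = k₀ then n else b q)
  simp only [Equiv.symm_apply_eq] at h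
  rw [h]
  constructor
  · rintro ⟨x, y, hxy⟩
    have hA : ∀ e : V, x (A one) * y (A e) - x (A e) * y (A one) = 0 := fun e => by
      have := hxy (.inl (.inl e))
      simpa [c, b, k₀, minorForm_unit] using this
    have hB : ∀ e : V, x (B one) * y (B e) - x (B e) * y (B one) = 0 := fun e => by
      have := hxy (.inl (.inr (.inl e)))
      simpa [c, b, k₀, minorForm_unit] using this
    have hAB : ∀ e : V, x (A one) * y (B e) - x (B e) * y (A one)
        = x (A e) * y (B one) - x (B one) * y (A e) := fun e => by
      have := hxy (.inl (.inr (.inr e)))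
      simp [c, b, k₀, minorForm_unit, minorForm_sub] at this
      linarith
    have hE : ∀ e : V, _ := fun e => hxy (.inr (.inl e))
    have hR1 : x (A one) * y (B R₁) - x (B R₁) * y (A one) = 0 := by
      have := hxy (.inr (.inr (.inl ())))
      simpa [c, b, k₀, minorForm_unit] using this
    have hR2 : x (A one) * y (B R₂) - x (B R₂) * y (A one) = n := by
      have := hxy (.inr (.inr (.inr ())))
      simpa [c, b, k₀, minorForm_unit] using this
    have h11 : x (A one) * y (B one) - x (B one) * y (A one) = 1 := by
      have := hE one
      simpa [c, b, k₀, minorForm_unit, one] using this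
    let val : V → ℤ := fun e => x (A one) * y (B e) - x (B e) * y (A one)
    let w : ν → ℤ := fun i => val (r (var i))
    have hmul : ∀ f g : V, x (A f) * y (B g) - x (B g) * y (A f) = val f * val g := by
      intro f g
      have pl : (x (A one) * y (B one) - x (B one) * y (A one)) *
          (x (A f) * y (B g) - x (B g) * y (A f)) =
          (x (A one) * y (A f) - x (A f) * y (A one)) * (x (B one) * y (B g) - x (B g) * y (B one))
          + (x (A one) * y (B g) - x (B g) * y (A one)) *
            (x (A f) * y (B one) - x (B one) * y (A f)) := by ring
      rw [h11, hA, ← hAB f] at pl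
      simp only [val]
      linarith
    have hval : ∀ (e : PExpr ν) (he : e ∈ l), val ⟨e, he⟩ = e.eval w := by
      intro e
      induction e with
      | var i => intro he; simp only [eval, w, hr _ he]
      | const k =>
        intro he
        have := hE ⟨_, he⟩
        simpa [c, b, k₀, minorForm_unit, val, eval] using this
      | add f g hf hg =>
        intro he
        obtain ⟨mf, mg⟩ := hl f g (.inl he)
        have := hE ⟨_, he⟩
        simp [c, b, k₀, minorForm_unit, minorForm_sub, hr f mf, hr g mg] at this
        simp only [eval, ← hf mf, ← hg mg, val]
        linarith
      | sub f g hf hg =>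
        intro he
        obtain ⟨mf, mg⟩ := hl f g (.inr (.inl he))
        have := hE ⟨_, he⟩
        simp [c, b, k₀, minorForm_unit, minorForm_sub, hr f mf, hr g mg] at this
        simp only [eval, ← hf mf, ← hg mg, val]
        linarith
      | mul f g hf hg =>
        intro he
        obtain ⟨mf, mg⟩ := hl f g (.inr (.inr he))
        have := hE ⟨_, he⟩
        simp [c, b, k₀, minorForm_unit, minorForm_sub, hr f mf, hr g mg] at this
        have h2 := hmul ⟨f, mf⟩ ⟨g, mg⟩
        simp only [eval, ← hf mf, ← hg mg]
        simp only [val] at h2 ⊢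
        linarith
    refine ⟨w, ?_, ?_⟩
    · rw [← hval E₁ R₁.2]; exact hR1
    · rw [← hval E₂ R₂.2]; exact hR2
  · rintro ⟨w, h1, h2⟩
    refine ⟨fun p => if p.2 then 0 else p.1.1.eval w, fun p => if p.2 then p.1.1.eval w else 0, ?_⟩
    rintro ((e | e | e) | ⟨e, he⟩ | _ | _)
    · simp [c, b, k₀, minorForm_unit, A]
    · simp [c, b, k₀, minorForm_unit, B]
    · simp [c, b, k₀, minorForm_unit, minorForm_sub, A, B, one, eval]
    · cases e with
      | var i => simp [c, b, k₀, minorForm_zero]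
      | const k => simp [c, b, k₀, minorForm_unit, A, B, one, eval]
      | add f g =>
        obtain ⟨mf, mg⟩ := hl f g (.inl he)
        simp [c, b, k₀, minorForm_unit, minorForm_sub, A, B, one, eval, hr f mf, hr g mg]
      | sub f g =>
        obtain ⟨mf, mg⟩ := hl f g (.inr (.inl he))
        simp [c, b, k₀, minorForm_unit, minorForm_sub, A, B, one, eval, hr f mf, hr g mg]
      | mul f g =>
        obtain ⟨mf, mg⟩ := hl f g (.inr (.inr he))
        simp [c, b, k₀, minorForm_unit, minorForm_sub, A, B, one, eval, hr f mf, hr g mg]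
    · simp [c, b, k₀, minorForm_unit, A, B, one, eval, R₁, h1]
    · simp [c, b, k₀, minorForm_unit, A, B, one, eval, R₂, h2]

/-- The expression for a sum of four squares. -/
def sq4 {α : Type} (i : α) : PExpr (α × Fin 4) :=
  .add (.add (.mul (.var (i, 0)) (.var (i, 0))) (.mul (.var (i, 1)) (.var (i, 1))))
    (.add (.mul (.var (i, 2)) (.var (i, 2))) (.mul (.var (i, 3)) (.var (i, 3))))

lemma poly_expr {α : Type} (p : Poly α) : ∃ E : PExpr (α × Fin 4), ∀ (w : α × Fin 4 → ℤ) (v : α → ℕ),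
    (∀ i, (sq4 i).eval w = (v i : ℤ)) → E.eval w = p v := by
  induction p using Poly.induction with
  | H1 i => exact ⟨sq4 i, fun w v h => by simpa using h i⟩
  | H2 n => exact ⟨.const n, fun w v h => rfl⟩
  | H3 p q hp hq =>
    obtain ⟨E, hE⟩ := hp
    obtain ⟨F, hF⟩ := hq
    exact ⟨.sub E F, fun w v h => by simp [PExpr.eval, hE w v h, hF w v h]⟩
  | H4 p q hp hq =>
    obtain ⟨E, hE⟩ := hp
    obtain ⟨F, hF⟩ := hq
    exact ⟨.mul E F, fun w v h => by simp [PExpr.eval, hE w v h, hF w v h]⟩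

lemma dioph_expr (S : ℕ → Prop) (h : Dioph {v : Unit → ℕ | S (v ())}) :
    ∃ (ν : Type) (E₁ E₂ : PExpr ν), ∀ n : ℕ, S n ↔
      ∃ w : ν → ℤ, E₁.eval w = 0 ∧ E₂.eval w = (n : ℤ) := by
  obtain ⟨β, p, hp⟩ := h
  obtain ⟨E, hE⟩ := poly_expr p
  refine ⟨_, E, sq4 (Sum.inl ()), fun n => (hp (fun _ => n)).trans ⟨?_, ?_⟩⟩
  · rintro ⟨t, ht⟩
    have : ∀ k : ℕ, ∃ z : Fin 4 → ℤ, z 0 * z 0 + z 1 * z 1 + (z 2 * z 2 + z 3 * z 3) = k := by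
      intro k
      obtain ⟨a, b, c, d, h⟩ := Nat.sum_four_squares k
      refine ⟨![a, b, c, d], ?_⟩
      rw [← h]
      simp
      ring
    choose z hz using this
    have hw : ∀ i, (sq4 i).eval (fun q : (Unit ⊕ β) × Fin 4 => z (Sum.elim (fun _ => n) t q.1) q.2)
      = ((Sum.elim (fun _ => n) t i : ℕ) : ℤ) := fun i => hz _
    exact ⟨_, (hE _ _ hw).trans ht, hw (Sum.inl ())⟩
  · rintro ⟨w, h1, h2⟩
    have hnn : ∀ i, 0 ≤ (sq4 i).eval w := by
      intro i
      simp only [sq4, PExpr.eval]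
      nlinarith [mul_self_nonneg (w (i, 0)), mul_self_nonneg (w (i, 1)), mul_self_nonneg (w (i, 2)),
        mul_self_nonneg (w (i, 3))]
    refine ⟨fun i => ((sq4 (Sum.inr i)).eval w).toNat, ?_⟩
    rw [← h1]
    symm
    apply hE
    rintro (i | i)
    · exact h2
    · exact (Int.toNat_of_nonneg (hnn _)).symm

lemma primrec_natCast : Primrec (fun n : ℕ => (n : ℤ)) := by
  apply Primrec.encode_iff.1
  refine (Primrec.nat_mul.comp (Primrec.const 2) Primrec.id).of_eq fun n => ?_
  rfl

lemma primrec_update {m : ℕ} (b₀ : Fin m → ℤ) (q₀ : Fin m) :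
    Primrec (fun (n : ℕ) (q : Fin m) => if q = q₀ then (n : ℤ) else b₀ q) := by
  rw [Primrec.fin_curry]
  apply Primrec₂.swap
  apply Primrec.fin_curry₁.2
  intro q
  by_cases h : q = q₀
  · simpa [h] using primrec_natCast
  · simpa [h] using Primrec.const _

end MRDP

/-- There exist fixed `m, s` such that the predicate (SKEW) on pairs of integer arrays
`(a, b)` is not computable. -/
theorem skew_undecidable :
    ∃ m s : ℕ, ¬ ComputablePred
      (fun p : (Fin m → Fin s → Fin s → ℤ) × (Fin m → ℤ) => SKEW m s p.1 p.2) := by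
  obtain ⟨S, hS, hnc⟩ := MRDP.exists_undecidable_dioph
  obtain ⟨ν, E₁, E₂, hE⟩ := MRDP.dioph_expr S hS
  obtain ⟨m, s, a, b₀, q₀, h⟩ := MRDP.skew_of_expr E₁ E₂
  refine ⟨m, s, fun hc => hnc ?_⟩
  refine ComputablePred.computable_of_manyOneReducible
    (q := fun p : (Fin m → Fin s → Fin s → ℤ) × (Fin m → ℤ) => SKEW m s p.1 p.2)
    ⟨fun n => (a, fun q => if q = q₀ then (n : ℤ) else b₀ q), ?_, fun n => ?_⟩ hc
  · exact ((Primrec.const a).pair (MRDP.primrec_update b₀ q₀)).to_comp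
  · exact (hE n).trans (h n).symm
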